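/- Let M be a reduced G_C-perfect R-module of G_C-dimension n. Then r.grade_R(M,C) + r.grade_R(Tr_C(M), C) = grade_R(Ext_R^n(M,C)) + 1 (as an equality in ℕ ∪ {∞}). -/

import Mathlib

open CategoryTheory TensorProduct

noncomputable section

universe u

variable (R : Type u) [CommRing R]

/-- The `i`-th Ext module `Ext_R^i(M, N)`. -/
def ExtM (M N : ModuleCat.{u} R) (i : ℕ) : ModuleCat.{u} R :=
  ((Ext R (ModuleCat.{u} R) i).obj (Opposite.op M)).obj N

/-- The `i`-th Tor module `Tor_i^R(M, N)`. -/
def TorM (M N : ModuleCat.{u} R) (i : ℕ) : ModuleCat.{u} R :=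
  ((Tor (ModuleCat.{u} R) i).obj M).obj N

/-- The biduality (evaluation) map `M → Hom_R(Hom_R(M, C), C)`. -/
def bidualityMap (C M : ModuleCat.{u} R) :
    ↥M →ₗ[R] ((↥M →ₗ[R] ↥C) →ₗ[R] ↥C) :=
  (LinearMap.id : (↥M →ₗ[R] ↥C) →ₗ[R] (↥M →ₗ[R] ↥C)).flip

/-- `C` is a semidualizing `R`-module. -/
def IsSemidualizing (C : ModuleCat.{u} R) : Prop :=
  Module.Finite R ↥C ∧
  Function.Bijective (fun r : R => (r • LinearMap.id : ↥C →ₗ[R] ↥C)) ∧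
  ∀ i : ℕ, 0 < i → Subsingleton (ExtM R C C i)

/-- `M` is totally `C`-reflexive. -/
def IsTotallyCReflexive (C M : ModuleCat.{u} R) : Prop :=
  Module.Finite R ↥M ∧
  Function.Bijective (bidualityMap R C M) ∧
  (∀ i : ℕ, 0 < i → Subsingleton (ExtM R M C i)) ∧
  (∀ i : ℕ, 0 < i → Subsingleton (ExtM R (ModuleCat.of R (↥M →ₗ[R] ↥C)) C i))

/-- `G_C`-dimension of `M` is at most `n`: there is an exact sequence
`0 → X_n → ⋯ → X_0 → M → 0` with each `X_i` totally `C`-reflexive. -/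
def gcdimLE (C : ModuleCat.{u} R) : ℕ → ModuleCat.{u} R → Prop
  | 0, M => IsTotallyCReflexive R C M
  | n+1, M => ∃ (X K : ModuleCat.{u} R) (f : ↥K →ₗ[R] ↥X) (g : ↥X →ₗ[R] ↥M),
      Function.Injective f ∧ Function.Surjective g ∧
      LinearMap.ker g = LinearMap.range f ∧
      IsTotallyCReflexive R C X ∧ gcdimLE C n K

/-- The `G_C`-dimension of `M`, as an element of `ℕ∞`. -/
def gcdim (C M : ModuleCat.{u} R) : ℕ∞ :=
  sInf ((fun n : ℕ => (n : ℕ∞)) '' {n | gcdimLE R C n M})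

/-- `grade_R(M) = inf { i | Ext_R^i(M, R) ≠ 0 }`, with `grade 0 = ∞`. -/
def gradeR (M : ModuleCat.{u} R) : ℕ∞ :=
  sInf ((fun i : ℕ => (i : ℕ∞)) ''
    {i | ¬ Subsingleton (ExtM R M (ModuleCat.of R R) i)})

/-- Reduced grade of `M` with respect to `C`. -/
def rgrade (C M : ModuleCat.{u} R) : ℕ∞ :=
  sInf ((fun i : ℕ => (i : ℕ∞)) ''
    {i | 0 < i ∧ ¬ Subsingleton (ExtM R M C i)})

/-- `M` is reduced `G_C`-perfect. -/
def IsReducedGCPerfect (C M : ModuleCat.{u} R) : Prop :=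
  gcdim R C M ≠ ⊤ ∧ rgrade R C M = gcdim R C M

/-- `M` is `G_C`-perfect. -/
def IsGCPerfect (C M : ModuleCat.{u} R) : Prop :=
  gcdim R C M ≠ ⊤ ∧ gradeR R M = gcdim R C M

/-- `π : P → M` is a projective cover: `P` projective, `π` surjective with superfluous kernel. -/
def IsProjectiveCover {P M : ModuleCat.{u} R} (π : ↥P →ₗ[R] ↥M) : Prop :=
  Module.Projective R ↥P ∧ Function.Surjective π ∧
  ∀ N : Submodule R ↥P, N ⊔ LinearMap.ker π = ⊤ → N = ⊤

/-- `P₁ →d P₀ →π M → 0` is a minimal projective presentation of `M`. -/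
def IsMinimalPresentation {P1 P0 M : ModuleCat.{u} R}
    (d : ↥P1 →ₗ[R] ↥P0) (π : ↥P0 →ₗ[R] ↥M) : Prop :=
  Module.Finite R ↥P1 ∧ Module.Finite R ↥P0 ∧
  IsProjectiveCover R π ∧
  LinearMap.range d = LinearMap.ker π ∧
  Module.Projective R ↥P1 ∧
  ∀ N : Submodule R ↥P1, N ⊔ LinearMap.ker d = ⊤ → N = ⊤

/-- `T` is (a module isomorphic to) the transpose `Tr_C(M)` of `M` with respect to `C`,
computed from a minimal projective presentation of `M`. -/
def IsTransposeC (C M T : ModuleCat.{u} R) : Prop :=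
  ∃ (P1 P0 : ModuleCat.{u} R) (d : ↥P1 →ₗ[R] ↥P0) (π : ↥P0 →ₗ[R] ↥M),
    IsMinimalPresentation R d π ∧
    Nonempty (↥T ≃ₗ[R]
      ((↥P1 →ₗ[R] ↥C) ⧸ LinearMap.range (LinearMap.lcomp R ↥C d)))

/-- `T` is the usual Auslander transpose `Tr(M) = Tr_R(M)`. -/
def IsTranspose (M T : ModuleCat.{u} R) : Prop :=
  IsTransposeC R (ModuleCat.of R R) M T

/-- `S` is (a module isomorphic to) the first syzygy `Ω N`, i.e. the kernel of a
projective cover of `N`. -/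
def IsSyzygyOf (N S : ModuleCat.{u} R) : Prop :=
  ∃ (P : ModuleCat.{u} R) (π : ↥P →ₗ[R] ↥N),
    Module.Finite R ↥P ∧ IsProjectiveCover R π ∧
    Nonempty (↥S ≃ₗ[R] LinearMap.ker π)

/-- `S` is (a module isomorphic to) the `n`-th syzygy `Ωⁿ M`. -/
def IsNthSyzygy : ℕ → ModuleCat.{u} R → ModuleCat.{u} R → Prop
  | 0, M, S => Nonempty (↥S ≃ₗ[R] ↥M)
  | n+1, M, S => ∃ K : ModuleCat.{u} R, IsNthSyzygy n M K ∧ IsSyzygyOf R K S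

/-- `L` is (a module isomorphic to) `λ M = Ω Tr M`. -/
def IsLambda (M L : ModuleCat.{u} R) : Prop :=
  ∃ T : ModuleCat.{u} R, IsTranspose R M T ∧ IsSyzygyOf R T L

/-- `M` is horizontally linked, i.e. `M ≅ λλM`. -/
def IsHorizontallyLinked (M : ModuleCat.{u} R) : Prop :=
  ∃ L L2 : ModuleCat.{u} R, IsLambda R M L ∧ IsLambda R L L2 ∧
    Nonempty (↥M ≃ₗ[R] ↥L2)

/-- `M` is stable: it has no non-zero projective direct summand. -/
def IsStable (M : ModuleCat.{u} R) : Prop :=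
  ∀ (P N : ModuleCat.{u} R), Module.Projective R ↥P →
    Nonempty (↥M ≃ₗ[R] (↥P × ↥N)) → Subsingleton ↥P

/-- `N` belongs to the Auslander class `A_C`. -/
def MemAuslanderClass (C N : ModuleCat.{u} R) : Prop :=
  Function.Bijective (TensorProduct.mk R ↥N ↥C) ∧
  (∀ i : ℕ, 0 < i → Subsingleton (TorM R C N i)) ∧
  (∀ i : ℕ, 0 < i → Subsingleton
    (ExtM R C (ModuleCat.of R (↥N ⊗[R] ↥C)) i))

/-- `R` is semiperfect: every finite `R`-module has a projective cover. -/
def IsSemiperfectRing : Prop :=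
  ∀ M : ModuleCat.{u} R, Module.Finite R ↥M →
    ∃ (P : ModuleCat.{u} R) (π : ↥P →ₗ[R] ↥M),
      Module.Finite R ↥P ∧ IsProjectiveCover R π

/-- Depth over a local ring, via Ext from the residue field. -/
def rdepth [IsLocalRing R] (M : ModuleCat.{u} R) : ℕ∞ :=
  sInf ((fun i : ℕ => (i : ℕ∞)) ''
    {i | ¬ Subsingleton
      (ExtM R (ModuleCat.of R (IsLocalRing.ResidueField R)) M i)})

/-- Projective dimension at most `n`. -/
def pdimLE : ℕ → ModuleCat.{u} R → Prop
  | 0, M => Module.Projective R ↥M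
  | n+1, M => ∃ (X K : ModuleCat.{u} R) (f : ↥K →ₗ[R] ↥X) (g : ↥X →ₗ[R] ↥M),
      Function.Injective f ∧ Function.Surjective g ∧
      LinearMap.ker g = LinearMap.range f ∧
      Module.Projective R ↥X ∧ pdimLE n K

/-- Projective dimension, as an element of `ℕ∞`. -/
def pdim (M : ModuleCat.{u} R) : ℕ∞ :=
  sInf ((fun n : ℕ => (n : ℕ∞)) '' {n | pdimLE R n M})

/-- `M` is `C`-`k`-torsionless. -/
def IsCkTorsionless (C M : ModuleCat.{u} R) (k : ℕ) : Prop :=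
  k = 0 ∨ ∀ T : ModuleCat.{u} R, IsTransposeC R C M T →
    ∀ i : ℕ, 1 ≤ i → i ≤ k → Subsingleton (ExtM R T C i)

/-- `M` is a `C`-syzygy: it embeds into `P ⊗_R C` with `P` finite projective. -/
def IsCSyzygy (C M : ModuleCat.{u} R) : Prop :=
  ∃ (P : ModuleCat.{u} R), Module.Finite R ↥P ∧ Module.Projective R ↥P ∧
    ∃ f : ↥M →ₗ[R] (↥P ⊗[R] ↥C), Function.Injective f


/-- There is an exact sequence `0 → N → X_k → ⋯ → X_1 → M → 0` of finite `R`-modules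
with `Ext_R^i(X_j, C) = 0` for all `i > 0` and all `j`. -/
def ExtVanishingChain (C : ModuleCat.{u} R) : ℕ → ModuleCat.{u} R → ModuleCat.{u} R → Prop
  | 0, N, M => Nonempty (↥N ≃ₗ[R] ↥M)
  | k+1, N, M => ∃ (X K : ModuleCat.{u} R) (f : ↥K →ₗ[R] ↥X) (g : ↥X →ₗ[R] ↥M),
      Function.Injective f ∧ Function.Surjective g ∧
      LinearMap.ker g = LinearMap.range f ∧
      Module.Finite R ↥X ∧ (∀ i : ℕ, 0 < i → Subsingleton (ExtM R X C i)) ∧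
      ExtVanishingChain C k N K


section HelpersB
set_option linter.unusedSectionVars false

theorem extM_zero_iff (M N : ModuleCat.{u} R) :
    Subsingleton (ExtM R M N 0) ↔ Subsingleton (Abelian.Ext M N 0) := by
  let P := (ProjectiveResolution.of M)
  have e : ExtM R M N 0 ≅ ModuleCat.of R (M ⟶ N) := by
    have h1 : Limits.PreservesFiniteLimits (((linearYoneda R (ModuleCat.{u} R)).obj N) ⋙ forget _) :=
      inferInstanceAs (Limits.PreservesFiniteLimits (yoneda.obj N))
    have h2 : Limits.PreservesFiniteLimits ((linearYoneda R (ModuleCat.{u} R)).obj N) :=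
      Limits.preservesFiniteLimits_of_reflects_of_preserves _ (forget _)
    have h3 : Limits.PreservesFiniteColimits ((linearYoneda R (ModuleCat.{u} R)).obj N).rightOp :=
      Limits.preservesFiniteColimits_rightOp _
    have := ((((linearYoneda R (ModuleCat.{u} R)).obj N).rightOp).leftDerivedZeroIsoSelf.app M).unop
    exact this.symm
  have e1 := e.toLinearEquiv.toEquiv
  have e2 : Abelian.Ext M N 0 ≃ (M ⟶ N) := Abelian.Ext.homEquiv₀
  rw [e1.subsingleton_congr, e2.subsingleton_congr]

theorem smul_extMk_aux {M N : ModuleCat.{u} R} (P : ProjectiveResolution M) {n : ℕ} (r : R)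
    (f : P.complex.X n ⟶ N) (m : ℕ) (hm : n + 1 = m) (hf : P.complex.d m n ≫ f = 0) :
    P.extMk (r • f) m hm (by rw [Linear.comp_smul, hf, smul_zero]) = r • P.extMk f m hm hf := by
  rw [Abelian.Ext.smul_eq_comp_mk₀, P.extMk_comp_mk₀]
  congr 1

theorem extM_succ_equiv (M N : ModuleCat.{u} R) (n : ℕ) :
    Nonempty (ExtM R M N (n+1) ≃ₗ[R] Abelian.Ext M N (n+1)) := by
  let P := (ProjectiveResolution.of M)
  let K := P.complex.linearYonedaObj R N
  have e1 := (P.isoExt (R := R) (n+1) N).toLinearEquiv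
  let S := K.sc' n (n+1) (n+2)
  have e2 : K.homology (n+1) ≅ S.homology := 
    ShortComplex.homologyMapIso (K.isoSc' n (n+1) (n+2) (by simp) (by simp))
  have e3 := (e2 ≪≫ S.moduleCatHomologyIso).toLinearEquiv
  have hg : ∀ x : P.complex.X (n+1) ⟶ N, S.g.hom x = P.complex.d (n+2) (n+1) ≫ x := fun x => rfl
  have hf : ∀ x : P.complex.X n ⟶ N, S.f.hom x = P.complex.d (n+1) n ≫ x := fun x => rfl
  let φ : LinearMap.ker S.g.hom →ₗ[R] Abelian.Ext M N (n+1) :=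
    { toFun := fun x => P.extMk (n := n+1) (Y := N) (x.1 : P.complex.X (n+1) ⟶ N) (n+2) rfl ((hg _).symm.trans x.2)
      map_add' := fun x y => (P.add_extMk (n := n+1) (Y := N) _ _ _ _ _ _).symm
      map_smul' := fun r x => smul_extMk_aux R P (n := n+1) (N := N) r _ _ _ _ }
  have hφ : Function.Surjective φ := by
    intro y
    obtain ⟨f, hf, h⟩ := P.extMk_surjective y (n+2) rfl
    exact ⟨⟨f, (hg f).trans hf⟩, h⟩
  have hk : LinearMap.range S.moduleCatToCycles = LinearMap.ker φ := by
    ext x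
    rw [LinearMap.mem_ker]
    refine Iff.trans ?_ (P.extMk_eq_zero_iff (n := n+1) (Y := N) (x.1 : P.complex.X (n+1) ⟶ N) (n+2) rfl ((hg _).symm.trans x.2) n rfl).symm
    constructor
    · rintro ⟨g, rfl⟩
      exact ⟨g, rfl⟩
    · rintro ⟨g, h⟩
      exact ⟨g, Subtype.ext h⟩
  have e4 := (Submodule.quotEquivOfEq _ _ hk).trans (φ.quotKerEquivOfSurjective hφ)
  exact ⟨e1.trans (e3.trans e4)⟩

/-- Vanishing of `Ext^i(M,N)`. -/
def XS (M N : Type u) [AddCommGroup M] [Module R M] [AddCommGroup N] [Module R N] (i : ℕ) : Prop :=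
  Subsingleton (Abelian.Ext (ModuleCat.of R M) (ModuleCat.of R N) i)

theorem extM_iff (M N : ModuleCat.{u} R) (i : ℕ) :
    Subsingleton (ExtM R M N i) ↔ XS R M N i := by
  cases i with
  | zero => exact extM_zero_iff R M N
  | succ n => exact (extM_succ_equiv R M N n).some.toEquiv.subsingleton_congr

variable {R}
variable {A B D N E : Type u} [AddCommGroup A] [Module R A] [AddCommGroup B] [Module R B]
  [AddCommGroup D] [Module R D] [AddCommGroup N] [Module R N] [AddCommGroup E] [Module R E]

theorem XS_zero_iff : XS R A N 0 ↔ ∀ f : A →ₗ[R] N, f = 0 := by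
  have e2 : Abelian.Ext (ModuleCat.of R A) (ModuleCat.of R N) 0 ≃ (A →ₗ[R] N) :=
    Abelian.Ext.homEquiv₀.trans ModuleCat.homEquiv
  rw [XS, e2.subsingleton_congr]
  exact ⟨fun h f => Subsingleton.elim _ _, fun h => ⟨fun a b => (h a).trans (h b).symm⟩⟩

theorem XS_proj [Module.Projective R A] (i : ℕ) (hi : 0 < i) : XS R A N i := by
  obtain ⟨j, rfl⟩ := Nat.exists_eq_succ_of_ne_zero hi.ne'
  have : Projective (ModuleCat.of R A) := (IsProjective.iff_projective _).1 inferInstance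
  exact Abelian.Ext.subsingleton_of_projective _ _ _

theorem XS_iff : ∀ {i : ℕ}, XS R A N i ↔ 
    ∀ x : Abelian.Ext (ModuleCat.of R A) (ModuleCat.of R N) i, x = 0 := by
  intro i
  exact ⟨fun h f => h.elim _ _, fun h => ⟨fun a b => (h a).trans (h b).symm⟩⟩

theorem XS_retract_sum_left {ι : Type} [Fintype ι] (p : ι → A →ₗ[R] B) (q : ι → B →ₗ[R] A)
    (h : ∀ a, ∑ j, q j (p j a) = a) {i : ℕ} (hB : XS R B N i) : XS R A N i := by
  rw [XS_iff] at hB ⊢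
  intro x
  have h1 : 𝟙 (ModuleCat.of R A) = ∑ j, ModuleCat.ofHom (p j) ≫ ModuleCat.ofHom (q j) := by
    ext a
    rw [ModuleCat.hom_sum, LinearMap.sum_apply]
    exact (h a).symm
  rw [← Abelian.Ext.mk₀_id_comp x, h1, Abelian.Ext.mk₀_sum, Abelian.Ext.sum_comp]
  refine Finset.sum_eq_zero fun j _ => ?_
  rw [← Abelian.Ext.mk₀_comp_mk₀, Abelian.Ext.comp_assoc_of_second_deg_zero, hB ((Abelian.Ext.mk₀ _).comp x _), Abelian.Ext.comp_zero]

theorem XS_retract_sum_right {ι : Type} [Fintype ι] (p : ι → A →ₗ[R] B) (q : ι → B →ₗ[R] A)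
    (h : ∀ a, ∑ j, q j (p j a) = a) {i : ℕ} (hB : XS R N B i) : XS R N A i := by
  rw [XS_iff] at hB ⊢
  intro x
  have h1 : 𝟙 (ModuleCat.of R A) = ∑ j, ModuleCat.ofHom (p j) ≫ ModuleCat.ofHom (q j) := by
    ext a
    rw [ModuleCat.hom_sum, LinearMap.sum_apply]
    exact (h a).symm
  rw [← Abelian.Ext.comp_mk₀_id x, h1, Abelian.Ext.mk₀_sum, Abelian.Ext.comp_sum]
  refine Finset.sum_eq_zero fun j _ => ?_
  rw [← Abelian.Ext.mk₀_comp_mk₀, ← Abelian.Ext.comp_assoc_of_second_deg_zero, hB (x.comp (Abelian.Ext.mk₀ _) _), Abelian.Ext.zero_comp]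

theorem XS_congr_left (e : A ≃ₗ[R] B) {i : ℕ} : XS R A N i ↔ XS R B N i :=
  ⟨fun h => XS_retract_sum_left (ι := Unit) (fun _ => e.symm.toLinearMap) (fun _ => e.toLinearMap) (by simp) h,
  fun h => XS_retract_sum_left (ι := Unit) (fun _ => e.toLinearMap) (fun _ => e.symm.toLinearMap) (by simp) h⟩

theorem XS_congr_right (e : A ≃ₗ[R] B) {i : ℕ} : XS R N A i ↔ XS R N B i :=
  ⟨fun h => XS_retract_sum_right (ι := Unit) (fun _ => e.symm.toLinearMap) (fun _ => e.toLinearMap) (by simp) h,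
  fun h => XS_retract_sum_right (ι := Unit) (fun _ => e.toLinearMap) (fun _ => e.symm.toLinearMap) (by simp) h⟩

/-- short exact sequences of linear maps -/
structure SE (f : A →ₗ[R] B) (g : B →ₗ[R] D) : Prop where
  inj : Function.Injective f
  surj : Function.Surjective g
  ex : Function.Exact f g

/-- the short complex -/
abbrev SE.sc {f : A →ₗ[R] B} {g : B →ₗ[R] D} (h : SE f g) : ShortComplex (ModuleCat.{u} R) :=
  ShortComplex.mk (ModuleCat.ofHom f) (ModuleCat.ofHom g) (by
    ext x; exact h.ex.apply_apply_eq_zero x)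

theorem SE.se {f : A →ₗ[R] B} {g : B →ₗ[R] D} (h : SE f g) : h.sc.ShortExact :=
  ModuleCat.shortComplex_shortExact _ h.ex h.inj h.surj

section
variable {f : A →ₗ[R] B} {g : B →ₗ[R] D} {n : ℕ}

theorem SE.c3 (h : SE f g) (hA : XS R A N n) (hB : XS R B N (n+1)) : XS R D N (n+1) := by
  rw [XS_iff] at *
  intro x
  obtain ⟨y, hy⟩ := Abelian.Ext.contravariant_sequence_exact₃ h.se _ x (hB _) (n₀ := n) (by omega)
  rw [← hy, hA y, Abelian.Ext.comp_zero]

theorem SE.c2 (h : SE f g) (hA : XS R A N n) (hD : XS R D N n) : XS R B N n := by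
  rw [XS_iff] at *
  intro x
  obtain ⟨y, hy⟩ := Abelian.Ext.contravariant_sequence_exact₂ h.se _ x (hA _)
  rw [← hy, hD y, Abelian.Ext.comp_zero]

theorem SE.c1 (h : SE f g) (hB : XS R B N n) (hD : XS R D N (n+1)) : XS R A N n := by
  rw [XS_iff] at *
  intro x
  obtain ⟨y, hy⟩ := Abelian.Ext.contravariant_sequence_exact₁ h.se _ x (n₁ := n+1) (by omega) (hD _)
  rw [← hy, hB y, Abelian.Ext.comp_zero]

theorem SE.extend (h : SE f g) (hD : XS R D N 1) (φ : A →ₗ[R] N) : ∃ ψ : B →ₗ[R] N, ψ ∘ₗ f = φ := by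
  rw [XS_iff] at *
  obtain ⟨y, hy⟩ := Abelian.Ext.contravariant_sequence_exact₁ h.se _ 
    (Abelian.Ext.mk₀ (ModuleCat.ofHom φ)) (n₁ := 1) (by omega) (hD _)
  obtain ⟨y, rfl⟩ := Abelian.Ext.homEquiv₀.symm.surjective y
  refine ⟨y.hom, ?_⟩
  simp only [Abelian.Ext.homEquiv₀_symm_apply, Abelian.Ext.mk₀_comp_mk₀] at hy
  have := Abelian.Ext.homEquiv₀.symm.injective hy
  exact congrArg ModuleCat.Hom.hom this

theorem SE.one (h : SE f g) (hB : XS R B N 1) (he : ∀ φ : A →ₗ[R] N, ∃ ψ : B →ₗ[R] N, ψ ∘ₗ f = φ) : XS R D N 1 := by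
  rw [XS_iff] at *
  intro x
  obtain ⟨y, hy⟩ := Abelian.Ext.contravariant_sequence_exact₃ h.se _ x (hB _) (n₀ := 0) (by omega)
  obtain ⟨y, rfl⟩ := Abelian.Ext.homEquiv₀.symm.surjective y
  obtain ⟨ψ, hψ⟩ := he y.hom
  have : y = h.sc.f ≫ ModuleCat.ofHom ψ := by ext1; exact hψ.symm
  rw [← hy, this, Abelian.Ext.homEquiv₀_symm_apply, ← Abelian.Ext.mk₀_comp_mk₀]
  rw [← Abelian.Ext.comp_assoc _ _ _ (add_zero 1) (zero_add 0) (by omega), h.se.extClass_comp, Abelian.Ext.zero_comp]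

theorem SE.v1 (h : SE f g) (hD : XS R N D n) (hB : XS R N B (n+1)) : XS R N A (n+1) := by
  rw [XS_iff] at *
  intro x
  obtain ⟨y, hy⟩ := Abelian.Ext.covariant_sequence_exact₁ _ h.se x (hB _) (n₀ := n) rfl
  rw [← hy, hD y, Abelian.Ext.zero_comp]

/-- The connecting map. -/
theorem SE.connect (h : SE f g) (hB : XS R B N (n+1)) : 
    ∃ δ : Abelian.Ext (ModuleCat.of R A) (ModuleCat.of R N) n →ₗ[R] Abelian.Ext (ModuleCat.of R D) (ModuleCat.of R N) (n+1),
    Function.Surjective δ ∧ ∀ x, δ x = 0 ↔ ∃ y : Abelian.Ext (ModuleCat.of R B) (ModuleCat.of R N) n, 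
      (Abelian.Ext.mk₀ (ModuleCat.ofHom f)).comp y (zero_add n) = x := by
  rw [XS_iff] at *
  refine ⟨Abelian.Ext.bilinearCompOfLinear R _ _ _ 1 n (n+1) (by omega) h.se.extClass, ?_, ?_⟩
  · intro x
    obtain ⟨y, hy⟩ := Abelian.Ext.contravariant_sequence_exact₃ h.se _ x (hB _) (n₀ := n) (by omega)
    exact ⟨y, hy⟩
  · intro x
    constructor
    · intro hx
      exact Abelian.Ext.contravariant_sequence_exact₁ h.se _ x (n₁ := n+1) (by omega) hx
    · rintro ⟨y, rfl⟩
      change h.se.extClass.comp _ (by omega) = _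
      have := Abelian.Ext.comp_assoc h.se.extClass (Abelian.Ext.mk₀ h.sc.f) y (add_zero 1) (zero_add n) (show 1 + 0 + n = n + 1 by omega)
      refine this.symm.trans ?_
      rw [h.se.extClass_comp, Abelian.Ext.zero_comp]
end

end HelpersB

section HelpersC
set_option linter.unusedSectionVars false
variable {R}
variable {A B D N E : Type u} [AddCommGroup A] [Module R A] [AddCommGroup B] [Module R B]
  [AddCommGroup D] [Module R D] [AddCommGroup N] [Module R N] [AddCommGroup E] [Module R E]

theorem exists_dual_basis' (P : Type u) [AddCommGroup P] [Module R P] [Module.Finite R P]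
    [Module.Projective R P] : ∃ (n : ℕ) (e : Fin n → P) (e' : Fin n → P →ₗ[R] R),
      ∀ p, ∑ j, e' j p • e j = p := by
  obtain ⟨n, f, hf⟩ := Module.Finite.exists_fin' R P
  obtain ⟨s, hs⟩ := Module.projective_lifting_property f LinearMap.id hf
  refine ⟨n, fun j => f (Pi.single j 1), fun j => LinearMap.proj j ∘ₗ s, fun p => ?_⟩
  have h1 := LinearMap.congr_fun hs p
  simp only [LinearMap.comp_apply, LinearMap.id_apply] at h1
  conv_rhs => rw [← h1, pi_eq_sum_univ' (s p), map_sum]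
  refine Finset.sum_congr rfl fun j _ => ?_
  rw [map_smul]; rfl

variable (R)
/-- semidualizing (unbundled) -/
structure SD (C : Type u) [AddCommGroup C] [Module R C] : Prop where
  fin : Module.Finite R C
  bij : Function.Bijective (fun r : R => (r • LinearMap.id : C →ₗ[R] C))
  ext : ∀ i : ℕ, 0 < i → XS R C C i

/-- biduality -/
def ev (C X : Type u) [AddCommGroup C] [Module R C] [AddCommGroup X] [Module R X] :
    X →ₗ[R] ((X →ₗ[R] C) →ₗ[R] C) :=
  (LinearMap.id : (X →ₗ[R] C) →ₗ[R] (X →ₗ[R] C)).flip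

@[simp] theorem ev_apply {C X : Type u} [AddCommGroup C] [Module R C] [AddCommGroup X] [Module R X]
    (x : X) (f : X →ₗ[R] C) : ev R C X x f = f x := rfl

/-- totally reflexive (unbundled) -/
structure TR (C X : Type u) [AddCommGroup C] [Module R C] [AddCommGroup X] [Module R X] : Prop where
  fin : Module.Finite R X
  bij : Function.Bijective (ev R C X)
  e1 : ∀ i : ℕ, 0 < i → XS R X C i
  e2 : ∀ i : ℕ, 0 < i → XS R (X →ₗ[R] C) C i

variable {R}
theorem tr_iff (C X : ModuleCat.{u} R) : IsTotallyCReflexive R C X ↔ TR R C X := by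
  constructor
  · rintro ⟨h1, h2, h3, h4⟩
    exact ⟨h1, h2, fun i hi => (extM_iff R _ _ _).1 (h3 i hi), fun i hi => (extM_iff R _ _ _).1 (h4 i hi)⟩
  · rintro ⟨h1, h2, h3, h4⟩
    exact ⟨h1, h2, fun i hi => (extM_iff R _ _ _).2 (h3 i hi), fun i hi => (extM_iff R _ _ _).2 (h4 i hi)⟩

theorem sd_iff (C : ModuleCat.{u} R) (h : IsSemidualizing R C) : SD R C := by
  obtain ⟨h1, h2, h3⟩ := h
  exact ⟨h1, h2, fun i hi => (extM_iff R _ _ _).1 (h3 i hi)⟩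

variable {C : Type u} [AddCommGroup C] [Module R C]

section
variable (P : Type u) [AddCommGroup P] [Module R P] [Module.Finite R P] [Module.Projective R P]

theorem dual_retract : ∃ (n : ℕ) (p : Fin n → (P →ₗ[R] C) →ₗ[R] C) (q : Fin n → C →ₗ[R] (P →ₗ[R] C)),
    ∀ f, ∑ j, q j (p j f) = f := by
  obtain ⟨n, e, e', h⟩ := exists_dual_basis' (R := R) P
  refine ⟨n, fun j => ev R C P (e j), fun j => (LinearMap.lsmul R C ∘ₗ e' j).flip, fun f => ?_⟩
  ext x
  conv_rhs => rw [← h x, map_sum]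
  simp [LinearMap.sum_apply]

theorem proj_dual_left (hC : SD R C) (i : ℕ) (hi : 0 < i) : XS R (P →ₗ[R] C) C i := by
  obtain ⟨n, p, q, h⟩ := dual_retract (R := R) (C := C) P
  exact XS_retract_sum_left p q h (hC.ext i hi)

theorem proj_dual_right {i : ℕ} (h : XS R N C i) : XS R N (P →ₗ[R] C) i := by
  obtain ⟨n, p, q, h'⟩ := dual_retract (R := R) (C := C) P
  exact XS_retract_sum_right p q h' h

theorem proj_TR (hC : SD R C) : TR R C P := by
  refine ⟨inferInstance, ⟨?_, ?_⟩, fun i hi => XS_proj i hi, proj_dual_left P hC⟩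
  · rw [injective_iff_map_eq_zero]
    intro x hx
    obtain ⟨n, e, e', h⟩ := exists_dual_basis' (R := R) P
    rw [← h x]
    refine Finset.sum_eq_zero fun j _ => ?_
    have : e' j x = 0 := by
      apply hC.bij.1
      ext c
      have := LinearMap.congr_fun hx ((LinearMap.lsmul R C ∘ₗ e' j).flip c)
      simpa using this
    rw [this, zero_smul]
  · intro φ
    obtain ⟨n, e, e', h⟩ := exists_dual_basis' (R := R) P
    have : ∀ j, ∃ r : R, ∀ c, φ ((LinearMap.lsmul R C ∘ₗ e' j).flip c) = r • c := by
      intro j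
      obtain ⟨r, hr⟩ := hC.bij.2 (φ ∘ₗ (LinearMap.lsmul R C ∘ₗ e' j).flip)
      exact ⟨r, fun c => (LinearMap.congr_fun hr c).symm⟩
    choose r hr using this
    refine ⟨∑ j, r j • e j, ?_⟩
    ext f
    have hf : f = ∑ j, (LinearMap.lsmul R C ∘ₗ e' j).flip (f (e j)) := by
      ext x
      conv_lhs => rw [← h x, map_sum]
      simp [LinearMap.sum_apply]
    conv_rhs => rw [hf, map_sum]
    simp [hr]
end

/-- dual of a short exact sequence -/
theorem SE.dual {f : A →ₗ[R] B} {g : B →ₗ[R] D} (h : SE f g) (hD : XS R D C 1) :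
    SE (LinearMap.lcomp R C g) (LinearMap.lcomp R C f) := by
  refine ⟨?_, fun φ => h.extend hD φ, ?_⟩
  · intro x y hxy
    ext d
    obtain ⟨b, rfl⟩ := h.surj d
    exact LinearMap.congr_fun hxy b
  · intro φ
    constructor
    · intro hφ
      have hk : ∀ b, g b = 0 → φ b = 0 := by
        intro b hb
        obtain ⟨a, rfl⟩ := (h.ex b).1 hb
        exact LinearMap.congr_fun hφ a
      let e := g.quotKerEquivOfSurjective h.surj
      refine ⟨(LinearMap.ker g).liftQ φ hk ∘ₗ e.symm.toLinearMap, ?_⟩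
      ext b
      have : e.symm (g b) = (LinearMap.ker g).mkQ b := by
        rw [LinearEquiv.symm_apply_eq]; rfl
      change (LinearMap.ker g).liftQ φ hk (e.symm (g b)) = φ b
      rw [this]; rfl
    · rintro ⟨ψ, rfl⟩
      ext a
      simp [LinearMap.lcomp_apply, h.ex.apply_apply_eq_zero]

theorem TR.of_ext {f : A →ₗ[R] B} {g : B →ₗ[R] D} (h : SE f g) (hA : TR R C A) (hD : TR R C D) :
    TR R C B := by
  have hd := h.dual (hD.e1 1 one_pos)
  have hdd := hd.dual (hA.e2 1 one_pos)
  have hfA := hA.fin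
  have hfD := hD.fin
  refine ⟨?_, ⟨?_, ?_⟩, fun i hi => h.c2 (hA.e1 i hi) (hD.e1 i hi),
    fun i hi => hd.c2 (hD.e2 i hi) (hA.e2 i hi)⟩
  · have : LinearMap.range f = LinearMap.ker g := (LinearMap.exact_iff.1 ‹SE f g›.ex).symm
    have e := g.quotKerEquivOfSurjective ‹SE f g›.surj
    rw [← this] at e
    have := Module.Finite.equiv e.symm
    exact Module.Finite.of_submodule_quotient (LinearMap.range f)
  · rw [injective_iff_map_eq_zero]
    intro b hb
    have h1 : g b = 0 := by
      apply hD.bij.1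
      ext φ
      simpa using LinearMap.congr_fun hb (φ ∘ₗ g)
    obtain ⟨a, rfl⟩ := (h.ex b).1 h1
    have : a = 0 := by
      apply hA.bij.1
      ext φ
      obtain ⟨ψ, rfl⟩ := hd.surj φ
      simpa using LinearMap.congr_fun hb ψ
    rw [this, map_zero]
  · intro φ
    obtain ⟨d, hdφ⟩ := hD.bij.2 (φ ∘ₗ LinearMap.lcomp R C g)
    obtain ⟨b, rfl⟩ := h.surj d
    obtain ⟨α, hα⟩ := (hdd.ex (φ - ev R C B b)).1 (by
      ext ψ
      have := LinearMap.congr_fun hdφ ψ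
      simp [LinearMap.lcomp_apply] at this ⊢
      rw [← this, sub_self])
    obtain ⟨a, rfl⟩ := hA.bij.2 α
    refine ⟨b + f a, ?_⟩
    ext ψ
    have := LinearMap.congr_fun hα ψ
    simp [LinearMap.lcomp_apply] at this ⊢
    rw [this]; abel

theorem TR.of_ker [Module.Finite R A] {f : A →ₗ[R] B} {g : B →ₗ[R] D} (h : SE f g) (hB : TR R C B) (hD : TR R C D) :
    TR R C A := by
  have hd := h.dual (hD.e1 1 one_pos)
  have h1 : XS R (A →ₗ[R] C) C 1 := by
    refine hd.one (hB.e2 1 one_pos) fun φ => ?_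
    obtain ⟨d, rfl⟩ := hD.bij.2 φ
    obtain ⟨b, rfl⟩ := h.surj d
    exact ⟨ev R C B b, rfl⟩
  have hdd := hd.dual h1
  refine ⟨inferInstance, ⟨?_, ?_⟩, fun i hi => h.c1 (hB.e1 i hi) (hD.e1 _ (Nat.succ_pos _)), ?_⟩
  · rw [injective_iff_map_eq_zero]
    intro a ha
    apply h.inj
    apply hB.bij.1
    ext ψ
    simpa using LinearMap.congr_fun ha (ψ ∘ₗ f)
  · intro φ
    obtain ⟨b, hb⟩ := hB.bij.2 (φ ∘ₗ LinearMap.lcomp R C f)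
    have hg : g b = 0 := by
      apply hD.bij.1
      ext ψ
      have := LinearMap.congr_fun hb (ψ ∘ₗ g)
      have h0 : LinearMap.lcomp R C f (ψ ∘ₗ g) = 0 := by
        ext a; simp [LinearMap.lcomp_apply, h.ex.apply_apply_eq_zero]
      simpa [h0] using this
    obtain ⟨a, rfl⟩ := (h.ex b).1 hg
    refine ⟨a, ?_⟩
    ext ψ
    obtain ⟨χ, rfl⟩ := hd.surj ψ
    have := LinearMap.congr_fun hb χ
    simpa using this
  · intro i hi
    obtain rfl | hi := eq_or_lt_of_le (Nat.succ_le_of_lt hi)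
    · exact h1
    · obtain ⟨j, rfl⟩ := Nat.exists_eq_succ_of_ne_zero (by omega : i ≠ 0)
      exact hd.c3 (hD.e2 j (by omega)) (hB.e2 _ (by omega))

end HelpersC

section HelpersD
set_option linter.unusedSectionVars false
variable {R}
variable {A B D N E : Type u} [AddCommGroup A] [Module R A] [AddCommGroup B] [Module R B]
  [AddCommGroup D] [Module R D] [AddCommGroup N] [Module R N] [AddCommGroup E] [Module R E]
variable {C : Type u} [AddCommGroup C] [Module R C]

theorem lift_inj {i : A →ₗ[R] B} (hi : Function.Injective i) (q : D →ₗ[R] B)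
    (h : ∀ z, ∃ a, i a = q z) : ∃ q' : D →ₗ[R] A, ∀ z, i (q' z) = q z := by
  let e := LinearEquiv.ofInjective i hi
  refine ⟨e.symm.toLinearMap ∘ₗ q.codRestrict (LinearMap.range i) h, fun z => ?_⟩
  have : (e (e.symm (q.codRestrict (LinearMap.range i) h z))).1 = q z := by
    rw [LinearEquiv.apply_symm_apply]; rfl
  exact this

theorem desc_surj {p : A →ₗ[R] B} (hp : Function.Surjective p) (q : A →ₗ[R] D)
    (h : ∀ a, p a = 0 → q a = 0) : ∃ q' : B →ₗ[R] D, ∀ a, q' (p a) = q a := by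
  let e := p.quotKerEquivOfSurjective hp
  refine ⟨(LinearMap.ker p).liftQ q h ∘ₗ e.symm.toLinearMap, fun b => ?_⟩
  have : e.symm (p b) = (LinearMap.ker p).mkQ b := by
    rw [LinearEquiv.symm_apply_eq]; rfl
  change (LinearMap.ker p).liftQ q h (e.symm (p b)) = q b
  rw [this]; rfl

theorem SE.of_ker (g : B →ₗ[R] D) (hg : Function.Surjective g) :
    SE (LinearMap.ker g).subtype g :=
  ⟨Subtype.val_injective, hg, fun b => ⟨fun h => ⟨⟨b, h⟩, rfl⟩, by rintro ⟨x, rfl⟩; exact x.2⟩⟩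

theorem SE.of_quot (S : Submodule R B) : SE S.subtype S.mkQ :=
  ⟨Subtype.val_injective, Submodule.mkQ_surjective _, fun b => by
    rw [Submodule.mkQ_apply, Submodule.Quotient.mk_eq_zero]
    exact ⟨fun h => ⟨⟨b, h⟩, rfl⟩, by rintro ⟨x, rfl⟩; exact x.2⟩⟩

/-- unbundled version of `gcdimLE` -/
def GCL (R : Type u) [CommRing R] (C : Type u) [AddCommGroup C] [Module R C] (k : ℕ) (M : Type u)
    [AddCommGroup M] [Module R M] : Prop :=
  gcdimLE R (ModuleCat.of R C) k (ModuleCat.of R M)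

theorem GCL_zero : GCL R C 0 A ↔ TR R C A := tr_iff _ _

theorem GCL_succ {k : ℕ} : GCL R C (k+1) A ↔ ∃ (X K : ModuleCat.{u} R) (f : K →ₗ[R] X) (g : X →ₗ[R] A),
    SE f g ∧ TR R C X ∧ GCL R C k K := by
  constructor
  · rintro ⟨X, K, f, g, h1, h2, h3, h4, h5⟩
    exact ⟨X, K, f, g, ⟨h1, h2, LinearMap.exact_iff.2 h3⟩, (tr_iff _ _).1 h4, h5⟩
  · rintro ⟨X, K, f, g, h, h4, h5⟩
    exact ⟨X, K, f, g, h.inj, h.surj, LinearMap.exact_iff.1 h.ex, (tr_iff (ModuleCat.of R C) _).2 h4, h5⟩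

theorem GCL.intro {k : ℕ} {f : A →ₗ[R] B} {g : B →ₗ[R] D} (h : SE f g) (hB : TR R C B) (hA : GCL R C k A) :
    GCL R C (k+1) D := GCL_succ.2 ⟨ModuleCat.of R B, ModuleCat.of R A, f, g, h, hB, hA⟩

theorem GCL.fin {k : ℕ} (h : GCL R C k A) : Module.Finite R A := by
  cases k with
  | zero => exact (GCL_zero.1 h).fin
  | succ k =>
    obtain ⟨X, K, f, g, h, h1, h2⟩ := GCL_succ.1 h
    have := h1.fin
    exact Module.Finite.of_surjective g h.surj

variable [IsNoetherianRing R]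

theorem SE.finA {f : A →ₗ[R] B} {g : B →ₗ[R] D} (h : SE f g) [Module.Finite R B] : Module.Finite R A :=
  Module.Finite.of_injective f h.inj

theorem GCL.of_ker {k : ℕ} {i : A →ₗ[R] B} {g : B →ₗ[R] D} (h : SE i g) (hB : GCL R C k B) (hD : TR R C D) :
    GCL R C k A := by
  have := hB.fin
  have := h.finA
  cases k with
  | zero => exact GCL_zero.2 (TR.of_ker h (GCL_zero.1 hB) hD)
  | succ k =>
    obtain ⟨X, L, l, p, hl, hX, hL⟩ := GCL_succ.1 hB
    have h1 := SE.of_ker (g ∘ₗ p) (h.surj.comp hl.surj)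
    have := hX.fin
    have := h1.finA
    have hX' := TR.of_ker h1 hX hD
    obtain ⟨q, hq⟩ := lift_inj h.inj (p ∘ₗ (LinearMap.ker (g ∘ₗ p)).subtype)
      (fun z => (h.ex _).1 z.2)
    refine GCL.intro (f := l.codRestrict (LinearMap.ker (g ∘ₗ p)) (fun x => by
      simp [hl.ex.apply_apply_eq_zero])) (g := q) ⟨?_, ?_, ?_⟩ hX' hL
    · intro x y hxy
      exact hl.inj (congrArg Subtype.val hxy)
    · intro a
      obtain ⟨x, hx⟩ := hl.surj (i a)
      refine ⟨⟨x, ?_⟩, ?_⟩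
      · simp [hx, h.ex.apply_apply_eq_zero]
      · apply h.inj
        rw [hq]; exact hx
    · intro x
      constructor
      · intro hx
        have : p x = 0 := (hq x).symm.trans (by rw [hx, map_zero])
        obtain ⟨y, hy⟩ := (hl.ex _).1 this
        exact ⟨y, Subtype.ext hy⟩
      · rintro ⟨y, rfl⟩
        apply h.inj
        exact (hq _).trans ((hl.ex.apply_apply_eq_zero y).trans (map_zero i).symm)

theorem GCL.of_ext {k : ℕ} (hC : SD R C) {i : A →ₗ[R] B} {g : B →ₗ[R] D} (h : SE i g) (hA : GCL R C k A)
    [Module.Finite R D] [Module.Projective R D] :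
    GCL R C k B := by
  cases k with
  | zero => exact GCL_zero.2 (TR.of_ext h (GCL_zero.1 hA) (proj_TR D hC))
  | succ k =>
    obtain ⟨X, L, l, p, hl, hX, hL⟩ := GCL_succ.1 hA
    obtain ⟨s, hs⟩ := Module.projective_lifting_property g LinearMap.id h.surj
    have hs' : ∀ d, g (s d) = d := fun d => LinearMap.congr_fun hs d
    have hX' : TR R C (X × D) := TR.of_ext (f := LinearMap.inl R X D) (g := LinearMap.snd R X D)
      ⟨LinearMap.inl_injective, LinearMap.snd_surjective, Function.Exact.inl_snd⟩ hX (proj_TR D hC)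
    refine GCL.intro (f := LinearMap.inl R X D ∘ₗ l) (g := LinearMap.coprod (i ∘ₗ p) s) ⟨?_, ?_, ?_⟩ hX' hL
    · exact LinearMap.inl_injective.comp hl.inj
    · intro b
      obtain ⟨a, ha⟩ := (h.ex (b - s (g b))).1 (by simp [hs'])
      obtain ⟨x, rfl⟩ := hl.surj a
      exact ⟨(x, g b), by simp [ha]⟩
    · rintro ⟨x, d⟩
      constructor
      · intro hx
        simp only [LinearMap.coprod_apply, LinearMap.comp_apply] at hx
        have hd : d = 0 := by
          have := congrArg g hx
          simpa [h.ex.apply_apply_eq_zero, hs'] using this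
        subst hd
        have : p x = 0 := h.inj (by simpa using hx)
        obtain ⟨y, hy⟩ := (hl.ex _).1 this
        exact ⟨y, by simp [hy]⟩
      · rintro ⟨y, hy⟩
        rw [← hy]
        simp [hl.ex.apply_apply_eq_zero]

theorem GCL.syzygy {k : ℕ} (hC : SD R C) {j : A →ₗ[R] B} {p : B →ₗ[R] D} (h : SE j p) (hD : GCL R C (k+1) D)
    [Module.Finite R B] [Module.Projective R B] :
    GCL R C k A := by
  obtain ⟨X, L, l, g, hl, hX, hL⟩ := GCL_succ.1 hD
  let Y := LinearMap.ker (g ∘ₗ LinearMap.fst R X B - p ∘ₗ LinearMap.snd R X B)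
  have hY : ∀ x b, (x, b) ∈ Y ↔ g x = p b := fun x b => by
    simp [Y, sub_eq_zero]
  have h1 : SE ((LinearMap.inl R X B ∘ₗ l).codRestrict Y (fun x => by
      simp [hY, hl.ex.apply_apply_eq_zero])) (LinearMap.snd R X B ∘ₗ Y.subtype) := by
    refine ⟨?_, ?_, ?_⟩
    · intro x y hxy
      exact hl.inj (congrArg (fun z => z.1.1) hxy)
    · intro b
      obtain ⟨x, hx⟩ := hl.surj (p b)
      exact ⟨⟨(x, b), (hY _ _).2 hx⟩, rfl⟩
    · rintro ⟨⟨x, b⟩, hx⟩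
      rw [hY] at hx
      constructor
      · intro hb
        have hb : b = 0 := hb
        subst hb
        obtain ⟨y, hy⟩ := (hl.ex _).1 (hx.trans (map_zero _))
        exact ⟨y, Subtype.ext (Prod.ext hy rfl)⟩
      · rintro ⟨y, hy⟩
        exact (congrArg (fun z => z.1.2) hy).symm
  have h2 : SE ((LinearMap.inr R X B ∘ₗ j).codRestrict Y (fun x =>
      (hY 0 (j x)).2 (by rw [map_zero, h.ex.apply_apply_eq_zero]))) (LinearMap.fst R X B ∘ₗ Y.subtype) := by
    refine ⟨?_, ?_, ?_⟩
    · intro x y hxy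
      exact h.inj (congrArg (fun z => z.1.2) hxy)
    · intro x
      obtain ⟨b, hb⟩ := h.surj (g x)
      exact ⟨⟨(x, b), (hY _ _).2 hb.symm⟩, rfl⟩
    · rintro ⟨⟨x, b⟩, hx⟩
      rw [hY] at hx
      constructor
      · intro hb
        have hb : x = 0 := hb
        subst hb
        obtain ⟨y, hy⟩ := (h.ex _).1 (hx.symm.trans (map_zero _))
        exact ⟨y, Subtype.ext (Prod.ext rfl hy)⟩
      · rintro ⟨y, hy⟩
        exact (congrArg (fun z => z.1.1) hy).symm
  exact GCL.of_ker h2 (GCL.of_ext hC h1 hL) hX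

end HelpersD

section HelpersE
set_option linter.unusedSectionVars false
variable {R}
variable {A B D N E : Type u} [AddCommGroup A] [Module R A] [AddCommGroup B] [Module R B]
  [AddCommGroup D] [Module R D] [AddCommGroup N] [Module R N] [AddCommGroup E] [Module R E]
variable {C : Type u} [AddCommGroup C] [Module R C]

theorem SE.connect0 {f : A →ₗ[R] B} {g : B →ₗ[R] D} (h : SE f g) (hB : XS R B N 1)
    (e : E ≃ₗ[R] Abelian.Ext (ModuleCat.of R D) (ModuleCat.of R N) (0+1)) :
    ∃ δ : (A →ₗ[R] N) →ₗ[R] E,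
    Function.Surjective δ ∧ ∀ x, δ x = 0 ↔ ∃ y : B →ₗ[R] N, y ∘ₗ f = x := by
  obtain ⟨δ, h1, h2⟩ := h.connect (n := 0) hB
  let c : (A →ₗ[R] N) →ₗ[R] Abelian.Ext (ModuleCat.of R A) (ModuleCat.of R N) 0 :=
    { toFun := fun x => Abelian.Ext.mk₀ (ModuleCat.ofHom x)
      map_add' := fun x y => by rw [ModuleCat.ofHom_add, Abelian.Ext.mk₀_add]
      map_smul' := fun r x => Abelian.Ext.mk₀_smul r (ModuleCat.ofHom x) }
  have hc : ∀ x, c x = Abelian.Ext.mk₀ (ModuleCat.ofHom x) := fun x => rfl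
  have hcs : Function.Surjective c := by
    intro y
    obtain ⟨y, rfl⟩ := Abelian.Ext.homEquiv₀.symm.surjective y
    exact ⟨y.hom, rfl⟩
  refine ⟨e.symm.toLinearMap ∘ₗ δ ∘ₗ c, ?_, fun x => ?_⟩
  · exact e.symm.surjective.comp (h1.comp hcs)
  · simp only [LinearMap.comp_apply, LinearEquiv.coe_coe, LinearEquiv.map_eq_zero_iff, h2, hc]
    constructor
    · rintro ⟨y, hy⟩
      obtain ⟨y, rfl⟩ := Abelian.Ext.homEquiv₀.symm.surjective y
      refine ⟨y.hom, ?_⟩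
      simp only [Abelian.Ext.homEquiv₀_symm_apply, Abelian.Ext.mk₀_comp_mk₀] at hy
      have := Abelian.Ext.homEquiv₀.symm.injective hy
      exact congrArg ModuleCat.Hom.hom this
    · rintro ⟨y, rfl⟩
      exact ⟨Abelian.Ext.mk₀ (ModuleCat.ofHom y), by rw [Abelian.Ext.mk₀_comp_mk₀]; rfl⟩

theorem lemmaB (hC : SD R C) {P2 P1 P0 : Type u} [AddCommGroup P2] [Module R P2] [AddCommGroup P1] [Module R P1]
    [AddCommGroup P0] [Module R P0] [Module.Finite R P2] [Module.Finite R P1] [Module.Finite R P0]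
    [Module.Projective R P2] [Module.Projective R P1] [Module.Projective R P0]
    (d2 : P2 →ₗ[R] P1) (d : P1 →ₗ[R] P0) (hex : Function.Exact d2 d) :
    XS R ((P2 →ₗ[R] C) ⧸ LinearMap.range (LinearMap.lcomp R C d2)) C 1 := by
  refine (SE.of_quot _).one (proj_dual_left P2 hC 1 one_pos) fun φ => ?_
  obtain ⟨p1, hp1⟩ := (proj_TR P1 hC).bij.2 (φ ∘ₗ (LinearMap.lcomp R C d2).rangeRestrict)
  have hp1' : ∀ f : P1 →ₗ[R] C, φ ((LinearMap.lcomp R C d2).rangeRestrict f) = f p1 := fun f =>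
    (LinearMap.congr_fun hp1 f).symm
  have h0 : d p1 = 0 := by
    apply (proj_TR P0 hC).bij.1
    ext ψ
    have h1 : (LinearMap.lcomp R C d2).rangeRestrict (ψ ∘ₗ d) = 0 := by
      apply Subtype.ext
      ext x
      simp [hex.apply_apply_eq_zero]
    have := hp1' (ψ ∘ₗ d)
    rw [h1, map_zero] at this
    simpa using this.symm
  obtain ⟨p2, rfl⟩ := (hex _).1 h0
  refine ⟨ev R C P2 p2, ?_⟩
  ext x
  obtain ⟨f, rfl⟩ := (LinearMap.lcomp R C d2).surjective_rangeRestrict x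
  rw [hp1']; rfl

theorem main_base [IsNoetherianRing R] (hC : SD R C) (M P1 P0 E : Type u) [AddCommGroup M] [Module R M] [AddCommGroup P1] [Module R P1]
    [AddCommGroup P0] [Module R P0] [AddCommGroup E] [Module R E] [Module.Finite R P1] [Module.Finite R P0]
    [Module.Projective R P1] [Module.Projective R P0]
    (d : P1 →ₗ[R] P0) (p : P0 →ₗ[R] M) (hex : Function.Exact d p) (hp : Function.Surjective p)
    (hM : GCL R C 1 M)
    (e : E ≃ₗ[R] Abelian.Ext (ModuleCat.of R M) (ModuleCat.of R C) (0+1)) :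
    (∀ i, 1 ≤ i → (XS R ((P1 →ₗ[R] C) ⧸ LinearMap.range (LinearMap.lcomp R C d)) C i ↔ XS R E C i)) ∧
    XS R E C 0 := by
  have hK := SE.of_ker p hp
  have tK : TR R C (LinearMap.ker p) := GCL_zero.1 (GCL.syzygy hC hK hM)
  obtain ⟨δ, h1, h2⟩ := hK.connect0 (XS_proj 1 one_pos) e
  let d' : P1 →ₗ[R] LinearMap.ker p := d.codRestrict (LinearMap.ker p) (fun x => hex.apply_apply_eq_zero x)
  have hd' : Function.Surjective d' := by
    rintro ⟨x, hx⟩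
    obtain ⟨y, rfl⟩ := (hex x).1 hx
    exact ⟨y, rfl⟩
  have hdd : (LinearMap.ker p).subtype ∘ₗ d' = d := rfl
  have hinj : Function.Injective (LinearMap.lcomp R C d') := by
    intro x y hxy
    ext k
    obtain ⟨q, rfl⟩ := hd' k
    exact LinearMap.congr_fun hxy q
  have hQ : SE (LinearMap.lcomp R C d') (LinearMap.range (LinearMap.lcomp R C d')).mkQ :=
    ⟨hinj, Submodule.mkQ_surjective _, fun b => by
      rw [Submodule.mkQ_apply, Submodule.Quotient.mk_eq_zero]; rfl⟩
  have hQ1 : ∀ i, 1 ≤ i → XS R ((P1 →ₗ[R] C) ⧸ LinearMap.range (LinearMap.lcomp R C d')) C i := by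
    intro i hi
    obtain rfl | hi := eq_or_lt_of_le hi
    · refine hQ.one (proj_dual_left P1 hC 1 one_pos) fun φ => ?_
      obtain ⟨k, rfl⟩ := tK.bij.2 φ
      obtain ⟨q, rfl⟩ := hd' k
      exact ⟨ev R C P1 q, rfl⟩
    · obtain ⟨j, rfl⟩ := Nat.exists_eq_succ_of_ne_zero (by omega : i ≠ 0)
      exact hQ.c3 (tK.e2 j (by omega)) (proj_dual_left P1 hC _ (by omega))
  have hle : LinearMap.range (LinearMap.lcomp R C d) ≤ LinearMap.range (LinearMap.lcomp R C d') := by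
    rintro _ ⟨ψ, rfl⟩
    exact ⟨ψ ∘ₗ (LinearMap.ker p).subtype, rfl⟩
  obtain ⟨τ, hτ⟩ := desc_surj h1 ((LinearMap.range (LinearMap.lcomp R C d)).mkQ ∘ₗ LinearMap.lcomp R C d') (by
    intro φ hφ
    obtain ⟨ψ, rfl⟩ := (h2 φ).1 hφ
    simp only [LinearMap.comp_apply, Submodule.mkQ_apply, Submodule.Quotient.mk_eq_zero]
    exact ⟨ψ, rfl⟩)
  have hT : SE τ (Submodule.factor hle) := by
    refine ⟨?_, ?_, ?_⟩
    · rw [injective_iff_map_eq_zero]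
      intro x hx
      obtain ⟨φ, rfl⟩ := h1 x
      rw [hτ] at hx
      simp only [LinearMap.comp_apply, Submodule.mkQ_apply, Submodule.Quotient.mk_eq_zero] at hx
      obtain ⟨ψ, hψ⟩ := hx
      rw [h2]
      exact ⟨ψ, hinj hψ⟩
    · exact Submodule.factor_surjective hle
    · intro x
      obtain ⟨f, rfl⟩ := Submodule.mkQ_surjective _ x
      constructor
      · intro hf
        have : f ∈ LinearMap.range (LinearMap.lcomp R C d') := by
          exact (Submodule.Quotient.mk_eq_zero _).1 hf
        obtain ⟨φ, rfl⟩ := this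
        exact ⟨δ φ, hτ φ⟩
      · rintro ⟨y, hy⟩
        obtain ⟨φ, rfl⟩ := h1 y
        rw [hτ] at hy
        rw [← hy]
        exact (Submodule.Quotient.mk_eq_zero _).2 ⟨φ, rfl⟩
  refine ⟨fun i hi => ⟨fun h => hT.c1 h (hQ1 _ (by omega)), fun h => hT.c2 h (hQ1 _ hi)⟩, ?_⟩
  rw [XS_zero_iff]
  intro φ
  obtain ⟨k, hk⟩ := tK.bij.2 (φ ∘ₗ δ)
  have hk0 : k = 0 := by
    apply Subtype.ext
    apply (proj_TR P0 hC).bij.1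
    ext ψ
    have h3 := LinearMap.congr_fun hk (ψ ∘ₗ (LinearMap.ker p).subtype)
    have h4 : δ (ψ ∘ₗ (LinearMap.ker p).subtype) = 0 := (h2 _).2 ⟨ψ, rfl⟩
    simp only [LinearMap.comp_apply, h4, map_zero] at h3
    simpa using h3
  rw [hk0, map_zero] at hk
  ext x
  obtain ⟨y, rfl⟩ := h1 x
  exact (LinearMap.congr_fun hk y).symm

theorem main_ind [IsNoetherianRing R] (hC : SD R C) (n : ℕ) :
    ∀ (M P1 P0 E : Type u) [AddCommGroup M] [Module R M] [AddCommGroup P1] [Module R P1]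
    [AddCommGroup P0] [Module R P0] [AddCommGroup E] [Module R E] [Module.Finite R P1] [Module.Finite R P0]
    [Module.Projective R P1] [Module.Projective R P0]
    (d : P1 →ₗ[R] P0) (p : P0 →ₗ[R] M) (_hex : Function.Exact d p) (_hp : Function.Surjective p)
    (_hM : GCL R C (n+1) M) (_hx : ∀ i, 0 < i → i < n+1 → XS R M C i)
    (_e : E ≃ₗ[R] Abelian.Ext (ModuleCat.of R M) (ModuleCat.of R C) (n+1)),
    (∀ i, 1 ≤ i → (XS R ((P1 →ₗ[R] C) ⧸ LinearMap.range (LinearMap.lcomp R C d)) C i ↔ XS R E C (i+n))) ∧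
    ∀ j, j ≤ n → XS R E C j := by
  induction n with
  | zero =>
    intro M P1 P0 E _ _ _ _ _ _ _ _ _ _ _ _ d p hex hp hM hx e
    obtain ⟨h1, h2⟩ := main_base hC M P1 P0 E d p hex hp hM e
    exact ⟨h1, fun j hj => by obtain rfl : j = 0 := by omega
                              exact h2⟩
  | succ n ih =>
    intro M P1 P0 E _ _ _ _ _ _ _ _ _ _ _ _ d p hex hp hM hx e
    have hK := SE.of_ker p hp
    have gK := GCL.syzygy hC hK hM
    obtain ⟨m, f, hf⟩ := Module.Finite.exists_fin' R (LinearMap.ker d)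
    let d2 : (Fin m → R) →ₗ[R] P1 := (LinearMap.ker d).subtype ∘ₗ f
    have hex2 : Function.Exact d2 d := by
      intro x
      constructor
      · intro hx
        obtain ⟨y, hy⟩ := hf ⟨x, hx⟩
        exact ⟨y, congrArg Subtype.val hy⟩
      · rintro ⟨y, rfl⟩
        exact (f y).2
    let d' : P1 →ₗ[R] LinearMap.ker p := d.codRestrict (LinearMap.ker p) (fun x => hex.apply_apply_eq_zero x)
    have hd' : Function.Surjective d' := by
      rintro ⟨x, hx⟩
      obtain ⟨y, rfl⟩ := (hex x).1 hx
      exact ⟨y, rfl⟩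
    have hex2' : Function.Exact d2 d' := by
      intro x
      rw [← hex2 x]
      exact ⟨fun h => congrArg Subtype.val h, fun h => Subtype.ext h⟩
    obtain ⟨δ, h1, h2⟩ := hK.connect (n := n+1) (N := C) (XS_proj _ (by omega))
    have hinj : Function.Injective δ := by
      rw [injective_iff_map_eq_zero]
      intro x hx
      obtain ⟨y, rfl⟩ := (h2 x).1 hx
      have := XS_iff.1 (XS_proj (R := R) (A := P0) (N := C) (n+1) (by omega)) y
      rw [this, Abelian.Ext.comp_zero]
    have e' := e.trans (LinearEquiv.ofBijective δ ⟨hinj, h1⟩).symm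
    obtain ⟨i1, i2⟩ := ih (LinearMap.ker p) (Fin m → R) P1 E d2 d' hex2' hd' gK
      (fun i hi hi' => hK.c1 (XS_proj i hi) (hx _ (by omega) (by omega))) e'
    have hT : SE ((LinearMap.range (LinearMap.lcomp R C d)).liftQ (LinearMap.lcomp R C d2) (by
        rintro _ ⟨ψ, rfl⟩
        rw [LinearMap.mem_ker]
        refine LinearMap.ext fun x => ?_
        change ψ (d (d2 x)) = 0
        rw [hex2.apply_apply_eq_zero, map_zero]))
        (LinearMap.range (LinearMap.lcomp R C d2)).mkQ := by
      refine ⟨?_, Submodule.mkQ_surjective _, ?_⟩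
      · rw [injective_iff_map_eq_zero]
        intro x h
        obtain ⟨g, rfl⟩ := Submodule.mkQ_surjective _ x
        have hg : ∀ y, g (d2 y) = 0 := fun y => LinearMap.congr_fun h y
        obtain ⟨g', hg'⟩ := desc_surj hd' g (fun a ha => by
          obtain ⟨y, rfl⟩ := (hex2' a).1 ha
          exact hg y)
        obtain ⟨ψ, hψ⟩ := hK.extend (hx 1 (by omega) (by omega)) g'
        rw [Submodule.mkQ_apply, Submodule.Quotient.mk_eq_zero]
        refine ⟨ψ, ?_⟩
        ext a
        rw [← hg', ← hψ]; rfl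
      · intro b
        rw [Submodule.mkQ_apply, Submodule.Quotient.mk_eq_zero]
        constructor
        · rintro ⟨g, rfl⟩
          exact ⟨Submodule.Quotient.mk g, rfl⟩
        · rintro ⟨y, rfl⟩
          obtain ⟨g, rfl⟩ := Submodule.mkQ_surjective _ y
          exact ⟨g, rfl⟩
    constructor
    · intro i hi
      have h3 : i + (n + 1) = i + 1 + n := by omega
      rw [h3, ← i1 (i+1) (by omega)]
      exact ⟨fun h => hT.c3 h (proj_dual_left _ hC _ (by omega)),
        fun h => hT.c1 (proj_dual_left _ hC _ (by omega)) h⟩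
    · intro j hj
      obtain rfl | hj := eq_or_lt_of_le hj
      · have := (i1 1 le_rfl).1 (lemmaB hC d2 d hex2)
        rwa [add_comm] at this
      · exact i2 j (by omega)

end HelpersE

section HelpersF
set_option linter.unusedSectionVars false
variable {R}
variable {A B D N E : Type u} [AddCommGroup A] [Module R A] [AddCommGroup B] [Module R B]
  [AddCommGroup D] [Module R D] [AddCommGroup N] [Module R N] [AddCommGroup E] [Module R E]
variable {C : Type u} [AddCommGroup C] [Module R C]

theorem dual_vanish [IsNoetherianRing R] (i : ℕ) : ∀ (D : Type u) [AddCommGroup D] [Module R D] [Module.Finite R D]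
    (_hD : ∀ j, 0 < j → XS R D C j) (_hE : ∀ j, j ≤ i → XS R E C j), XS R E (D →ₗ[R] C) i := by
  induction i with
  | zero =>
    intro D _ _ _ hD hE
    obtain ⟨m, f, hf⟩ := Module.Finite.exists_fin' R D
    have hd := (SE.of_ker f hf).dual (hD 1 one_pos)
    rw [XS_zero_iff]
    intro φ
    have h1 := XS_zero_iff.1 (proj_dual_right (Fin m → R) (hE 0 le_rfl)) (LinearMap.lcomp R C f ∘ₗ φ)
    refine LinearMap.ext fun x => ?_
    apply hd.inj
    exact (LinearMap.congr_fun h1 x).trans (map_zero _).symm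
  | succ i ih =>
    intro D _ _ _ hD hE
    obtain ⟨m, f, hf⟩ := Module.Finite.exists_fin' R D
    have h := SE.of_ker f hf
    have hd := h.dual (hD 1 one_pos)
    exact hd.v1 (ih (LinearMap.ker f) (fun j hj => h.c1 (XS_proj j hj) (hD _ (by omega)))
      (fun j hj => hE j (by omega))) (proj_dual_right (Fin m → R) (hE _ le_rfl))

/-- the homothety isomorphism -/
theorem SD.equiv (hC : SD R C) : Nonempty (R ≃ₗ[R] (C →ₗ[R] C)) :=
  ⟨LinearEquiv.ofBijective (LinearMap.lsmul R C) (by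
    have : ⇑(LinearMap.lsmul R C) = (fun r : R => (r • LinearMap.id : C →ₗ[R] C)) := by
      funext r; ext c; rfl
    rw [this]; exact hC.bij)⟩

theorem grade_one [IsNoetherianRing R] (hC : SD R C) (i : ℕ) (hE : ∀ j, j ≤ i → XS R E C j) : XS R E R i := by
  have := hC.fin
  exact (XS_congr_right hC.equiv.some).2 (dual_vanish i C hC.ext hE)

theorem exists_a (hC : SD R C) (p : Ideal R) [p.IsPrime] (r : ℕ) (q : (Fin r → R) →ₗ[R] C)
    (hq : Function.Surjective q) :
    ∃ a : (Fin r → R) →ₗ[R] R, (∀ x, q x = 0 → a x ∈ p) ∧ ∃ x, a x ∉ p := by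
  have := hC.fin
  have hsupp : (⟨p, inferInstance⟩ : PrimeSpectrum R) ∈ Module.support R C := by
    rw [Module.mem_support_iff_of_finite]
    intro x hx
    have : x = 0 := by
      apply hC.bij.1
      ext c
      simpa using Module.mem_annihilator.1 hx c
    rw [this]; exact zero_mem _
  rw [Module.mem_support_iff_nontrivial_residueField_tensorProduct] at hsupp
  change Nontrivial (p.ResidueField ⊗[R] C) at hsupp
  obtain ⟨v, hv⟩ := exists_ne (0 : p.ResidueField ⊗[R] C)
  obtain ⟨φ, hφ⟩ : ∃ φ : Module.Dual p.ResidueField (p.ResidueField ⊗[R] C), φ v ≠ 0 := by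
    by_contra! h
    exact hv ((Module.forall_dual_apply_eq_zero_iff p.ResidueField v).1 h)
  let h : C →ₗ[R] p.ResidueField := φ.restrictScalars R ∘ₗ TensorProduct.mk R p.ResidueField C 1
  have hh : h ≠ 0 := by
    intro h0
    apply hφ
    have : φ = 0 := by
      ext c
      exact LinearMap.congr_fun h0 c
    rw [this]; rfl
  obtain ⟨b, hb⟩ := IsLocalization.exist_integer_multiples_of_finite (nonZeroDivisors (R ⧸ p))
    (fun j : Fin r => h (q (Pi.single j 1)))
  choose a' ha' using hb
  choose a ha using fun j => Ideal.Quotient.mk_surjective (a' j)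
  obtain ⟨b', hb'⟩ := Ideal.Quotient.mk_surjective (b : R ⧸ p)
  have hb0 : (b : R ⧸ p) ≠ 0 := nonZeroDivisors.coe_ne_zero b
  let α : (Fin r → R) →ₗ[R] R := Fintype.linearCombination R a
  have key : ∀ x, algebraMap (R ⧸ p) p.ResidueField (Ideal.Quotient.mk p (α x)) = (b : R ⧸ p) • h (q x) := by
    have : ((Algebra.linearMap (R ⧸ p) p.ResidueField).restrictScalars R ∘ₗ (Submodule.mkQ p)) ∘ₗ α
        = b' • (h ∘ₗ q) := by
      refine LinearMap.pi_ext' fun j => LinearMap.ext_ring ?_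
      simp only [LinearMap.comp_apply, LinearMap.smul_apply, LinearMap.single_apply]
      have h1 : α (Pi.single j 1) = a j := by simp [α]
      rw [h1]
      have h2 := ha' j
      rw [← ha, ← hb'] at h2
      refine h2.trans ?_
      rw [Algebra.smul_def, Algebra.smul_def]; rfl
    intro x
    refine (LinearMap.congr_fun this x).trans ?_
    rw [← hb', Algebra.smul_def, LinearMap.smul_apply, Algebra.smul_def]; rfl
  refine ⟨α, fun x hx => ?_, ?_⟩
  · have h1 := key x
    rw [hx, map_zero, smul_zero] at h1
    rw [← Ideal.Quotient.eq_zero_iff_mem]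
    exact (map_eq_zero_iff _ (IsFractionRing.injective (R ⧸ p) p.ResidueField)).1 h1
  · by_contra! hall
    apply hh
    ext c
    obtain ⟨x, rfl⟩ := hq c
    have h1 := key x
    rw [Ideal.Quotient.eq_zero_iff_mem.2 (hall x), map_zero, Algebra.smul_def, eq_comm, mul_eq_zero] at h1
    refine h1.resolve_left fun h2 => hb0 ?_
    exact (map_eq_zero_iff _ (IsFractionRing.injective (R ⧸ p) p.ResidueField)).1 h2

theorem SE.inj_cov {f : A →ₗ[R] B} {g : B →ₗ[R] D} (h : SE f g) {k : ℕ}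
    (hD : ∀ j, j + 1 = k → XS R N D j)
    (x : Abelian.Ext (ModuleCat.of R N) (ModuleCat.of R A) k)
    (hx : x.comp (Abelian.Ext.mk₀ (ModuleCat.ofHom f)) (add_zero k) = 0) : x = 0 := by
  cases k with
  | zero =>
    obtain ⟨y, rfl⟩ := Abelian.Ext.homEquiv₀.symm.surjective x
    simp only [Abelian.Ext.homEquiv₀_symm_apply, Abelian.Ext.mk₀_comp_mk₀] at hx ⊢
    rw [Abelian.Ext.mk₀_eq_zero_iff] at hx ⊢
    ext1
    refine LinearMap.ext fun z => ?_
    apply h.inj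
    exact (LinearMap.congr_fun (congrArg ModuleCat.Hom.hom hx) z).trans (map_zero _).symm
  | succ k =>
    obtain ⟨y, rfl⟩ := Abelian.Ext.covariant_sequence_exact₁ _ h.se x hx (n₀ := k) rfl
    rw [XS_iff.1 (hD k rfl) y, Abelian.Ext.zero_comp]

/-- post-composition with a linear map on `Ext` -/
def push (k : ℕ) (f : A →ₗ[R] B) (x : Abelian.Ext (ModuleCat.of R N) (ModuleCat.of R A) k) :
    Abelian.Ext (ModuleCat.of R N) (ModuleCat.of R B) k :=
  x.comp (Abelian.Ext.mk₀ (ModuleCat.ofHom f)) (add_zero k)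

theorem push_push (k : ℕ) (f : A →ₗ[R] B) (g : B →ₗ[R] D) (x : Abelian.Ext (ModuleCat.of R N) (ModuleCat.of R A) k) :
    push k g (push k f x) = push k (g ∘ₗ f) x := by
  unfold push
  rw [Abelian.Ext.comp_assoc_of_second_deg_zero, Abelian.Ext.mk₀_comp_mk₀]; rfl

theorem push_sum {ι : Type} [Fintype ι] (k : ℕ) (f : ι → (A →ₗ[R] B)) (x : Abelian.Ext (ModuleCat.of R N) (ModuleCat.of R A) k) :
    push k (∑ j, f j) x = ∑ j, push k (f j) x := by
  unfold push
  have : ModuleCat.ofHom (∑ j, f j) = ∑ j, ModuleCat.ofHom (f j) := by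
    ext1; rw [ModuleCat.hom_sum]; rfl
  rw [this, Abelian.Ext.mk₀_sum, Abelian.Ext.comp_sum]

theorem push_smul (k : ℕ) (r : R) (f : A →ₗ[R] B) (x : Abelian.Ext (ModuleCat.of R N) (ModuleCat.of R A) k) :
    push k (r • f) x = push k f (r • x) := by
  unfold push
  have : ModuleCat.ofHom (r • f) = r • ModuleCat.ofHom f := rfl
  rw [this, Abelian.Ext.mk₀_smul, Abelian.Ext.comp_smul, Abelian.Ext.smul_comp]

theorem push_id (k : ℕ) (x : Abelian.Ext (ModuleCat.of R N) (ModuleCat.of R A) k) :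
    push k LinearMap.id x = x := Abelian.Ext.comp_mk₀_id x

theorem push_zero (k : ℕ) (f : A →ₗ[R] B) :
    push (N := N) k f 0 = 0 := by
  unfold push; rw [Abelian.Ext.zero_comp]

theorem grade_two [IsNoetherianRing R] (hC : SD R C) (k : ℕ) (hlt : ∀ j, j < k → XS R E C j)
    (hR : XS R E R k) : XS R E C k := by
  by_contra hcon
  have hnt : Nontrivial (Abelian.Ext (ModuleCat.of R E) (ModuleCat.of R C) k) :=
    not_subsingleton_iff_nontrivial.1 hcon
  obtain ⟨p, hp⟩ := associatedPrimes.nonempty R (Abelian.Ext (ModuleCat.of R E) (ModuleCat.of R C) k)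
  obtain ⟨hprime, y, hy⟩ := isAssociatedPrime_iff.1 hp
  have hy' : ∀ r, r ∈ p ↔ r • y = 0 := fun r => by
    rw [hy, Submodule.mem_colon_singleton, Submodule.mem_bot]
  have := hC.fin
  obtain ⟨r, q, hq⟩ := Module.Finite.exists_fin' R C
  obtain ⟨a, ha1, x, hax⟩ := exists_a hC p r q hq
  have h0 := SE.of_ker q hq
  have hd0 := h0.dual (hC.ext 1 one_pos)
  have hK : ∀ j, 0 < j → XS R (LinearMap.ker q) C j := fun j hj => h0.c1 (XS_proj j hj) (hC.ext _ (by omega))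
  obtain ⟨m, t, ht⟩ := Module.Finite.exists_fin' R (LinearMap.ker q)
  have h1 := SE.of_ker t ht
  have hd1 := h1.dual (hK 1 one_pos)
  have hK2 : ∀ j, 0 < j → XS R (LinearMap.ker t) C j := fun j hj => h1.c1 (XS_proj j hj) (hK _ (by omega))
  let α : C →ₗ[R] ((Fin r → R) →ₗ[R] C) := (LinearMap.lsmul R C ∘ₗ a).flip
  have e1 : push k (LinearMap.lcomp R C t) (push k (LinearMap.lcomp R C (LinearMap.ker q).subtype) (push k α y)) = 0 := by
    rw [push_push, push_push]
    have : LinearMap.lcomp R C t ∘ₗ LinearMap.lcomp R C (LinearMap.ker q).subtype ∘ₗ α =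
        ∑ j : Fin m, (a (t (Pi.single j 1)).1) • (LinearMap.lsmul R C ∘ₗ LinearMap.proj j : (Fin m → R) →ₗ[R] C →ₗ[R] C).flip := by
      refine LinearMap.ext fun c => LinearMap.pi_ext' fun i => LinearMap.ext_ring ?_
      simp only [LinearMap.sum_apply, LinearMap.smul_apply, LinearMap.comp_apply, LinearMap.single_apply]
      rw [Finset.sum_eq_single i]
      · simp [α]
      · intro j _ hj
        simp [hj]
      · simp
    rw [LinearMap.comp_assoc, this, push_sum]
    refine Finset.sum_eq_zero fun j _ => ?_
    rw [push_smul, (hy' _).1 (ha1 _ (t (Pi.single j 1)).2), push_zero]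
  have e2 := hd1.inj_cov (fun j hj => dual_vanish j _ hK2 (fun i hi => hlt i (by omega))) _ e1
  obtain ⟨w, hw⟩ := Abelian.Ext.covariant_sequence_exact₂ _ hd0.se (push k α y) e2
  have hw0 : w = 0 := XS_iff.1 ((XS_congr_right hC.equiv.some).1 hR) w
  rw [hw0, Abelian.Ext.zero_comp] at hw
  apply hax
  rw [hy']
  have e3 : push k (ev R C (Fin r → R) x) (push k α y) = 0 := by rw [← hw]; exact push_zero _ _
  rw [push_push] at e3
  have e4 : ev R C (Fin r → R) x ∘ₗ α = a x • LinearMap.id := by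
    ext c; simp [α]
  rwa [e4, push_smul, push_id] at e3

end HelpersF

section HelpersG

theorem sInf_img_eq {S : Set ℕ} {m : ℕ} (hm : m ∈ S) (hlt : ∀ j, j < m → j ∉ S) :
    sInf ((fun i : ℕ => (i : ℕ∞)) '' S) = m := by
  apply le_antisymm
  · exact sInf_le ⟨m, hm, rfl⟩
  · apply le_sInf
    rintro _ ⟨j, hj, rfl⟩
    have : m ≤ j := by
      by_contra h
      exact hlt j (by omega) hj
    exact Nat.cast_le.2 this

theorem sInf_img_empty {S : Set ℕ} (h : ∀ j, j ∉ S) :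
    sInf ((fun i : ℕ => (i : ℕ∞)) '' S) = ⊤ := by
  rw [Set.eq_empty_of_forall_notMem h, Set.image_empty, sInf_empty]

theorem sInf_img_mem {S : Set ℕ} {n : ℕ} (h : sInf ((fun i : ℕ => (i : ℕ∞)) '' S) = n) :
    n ∈ S ∧ ∀ j, j < n → j ∉ S := by
  classical
  by_cases hS : ∃ j, j ∈ S
  · have h1 := sInf_img_eq (Nat.find_spec hS) (fun j hj => Nat.find_min hS hj)
    have h2 : n = Nat.find hS := by
      have := h.symm.trans h1
      exact_mod_cast this
    rw [h2]
    exact ⟨Nat.find_spec hS, fun j hj => Nat.find_min hS hj⟩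
  · push Not at hS
    rw [sInf_img_empty hS] at h
    exact absurd h (by simp)


end HelpersG

/-- if `M` is reduced `G_C`-perfect of `G_C`-dimension `n`, then
`r.grade(M,C) + r.grade(Tr_C(M),C) = grade(Ext_R^n(M,C)) + 1` in `ℕ∞`. -/
theorem statement9 [IsNoetherianRing R] (hsp : IsSemiperfectRing R)
    (C : ModuleCat.{u} R) (hC : IsSemidualizing R C)
    (M : ModuleCat.{u} R) (hMfin : Module.Finite R ↥M)
    (n : ℕ) (hred : IsReducedGCPerfect R C M) (hdim : gcdim R C M = n) :
    ∀ T : ModuleCat.{u} R, IsTransposeC R C M T →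
      rgrade R C M + rgrade R C T = gradeR R (ExtM R M C n) + 1 := by
  rintro T ⟨P1, P0, d, p, ⟨hf1, hf0, ⟨hp0, hps, -⟩, hrk, hp1, -⟩, ⟨eT⟩⟩
  have hsd := sd_iff C hC
  have hrg : rgrade R C M = n := hred.2.trans hdim
  obtain ⟨⟨hn0, -⟩, hxlt⟩ := sInf_img_mem hrg
  obtain ⟨hgc, -⟩ := sInf_img_mem hdim
  obtain ⟨n, rfl⟩ := Nat.exists_eq_succ_of_ne_zero hn0.ne'
  have hx : ∀ i, 0 < i → i < n + 1 → XS R M C i := fun i hi hi' => by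
    have := hxlt i hi'
    simp only [Set.mem_ofPred_eq, not_and, not_not] at this
    exact (extM_iff R M C i).1 (this hi)
  obtain ⟨m1, m2⟩ := main_ind hsd n M P1 P0 (ExtM R M C (n+1)) d p (LinearMap.exact_iff.2 hrk.symm) hps hgc hx
    (extM_succ_equiv R M C n).some
  have m1' : ∀ i, 1 ≤ i → (XS R T C i ↔ XS R (ExtM R M C (n+1)) C (i + n)) := fun i hi =>
    (XS_congr_left eT).trans (m1 i hi)
  rw [hrg]
  generalize hE : ExtM R M C (n+1) = E at *
  classical
  by_cases hex : ∃ j, ¬ XS R E C j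
  · have hj := Nat.find_spec hex
    have hmin : ∀ i, i < Nat.find hex → XS R E C i := fun i hi => not_not.1 (Nat.find_min hex hi)
    generalize Nat.find hex = j at hj hmin
    have hjn : n < j := by
      by_contra h
      exact hj (m2 j (by omega))
    obtain ⟨i, rfl⟩ : ∃ i, j = i + n := ⟨j - n, by omega⟩
    have hg : gradeR R E = ((i + n : ℕ) : ℕ∞) := by
      refine sInf_img_eq ?_ ?_
      · intro h
        exact hj (grade_two hsd _ hmin ((extM_iff R E _ _).1 h))
      · intro k hk h
        exact h ((extM_iff R E _ _).2 (grade_one hsd k (fun l hl => hmin l (by omega))))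
    have hT : rgrade R C T = (i : ℕ∞) := by
      refine sInf_img_eq ⟨by omega, ?_⟩ ?_
      · intro h
        exact hj ((m1' i (by omega)).1 ((extM_iff R T C i).1 h))
      · rintro k hk ⟨h0, h⟩
        exact h ((extM_iff R T C k).2 ((m1' k h0).2 (hmin _ (by omega))))
    rw [hg, hT]
    norm_cast
    omega
  · push Not at hex
    have hg : gradeR R E = ⊤ := by
      refine sInf_img_empty fun k h => ?_
      exact h ((extM_iff R E _ _).2 (grade_one hsd k (fun l _ => hex l)))
    have hT : rgrade R C T = ⊤ := by
      refine sInf_img_empty ?_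
      rintro k ⟨h0, h⟩
      exact h ((extM_iff R T C k).2 ((m1' k h0).2 (hex _)))
    rw [hg, hT]
    simp


end
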